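/- Let f(x) be a monic polynomial of degree m with integer coefficients such that not all complex roots of f are integers (equivalently, f is not a product of m monic linear polynomials with integer coefficients), and let q_1, q_2, ..., q_m be integers. Then the equation (y + q_1)(y + q_2)···(y + q_m) = f(x) has only finitely many solutions (x, y) with x and y negative integers. -/

import Mathlib

open Polynomial

/-!
A polynomial of degree `n` with leading coefficient `a` and roots of norm at most `R` satisfies
`‖a‖ (‖z‖ - R) ^ n ≤ ‖f z‖ ≤ ‖a‖ (‖z‖ + R) ^ n`, the lower bound for `‖z‖ ≥ R`. If `f` and `g` have
the same degree and, up to sign, the same leading coefficient, then `f x = g y` therefore bounds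
`|x| - |y|`, so the integer solutions lie on finitely many lines `y = ±x + k`. On such a line the
equation is `f x = g (±x + k)`, which has finitely many solutions unless `f = g (±X + k)`. When `g`
is a product of linear factors, that identity would make `f` one as well.
-/

section Growth

variable {K : Type*} [NormedField K] {f g : K[X]}

lemma norm_eval_eq_prod_norm_sub_roots (hf : f.Splits) (z : K) :
    ‖f.eval z‖ = ‖f.leadingCoeff‖ * (f.roots.map fun r => ‖z - r‖).prod := by
  rw [hf.eval_eq_prod_roots, norm_mul]
  congr 1
  simpa only [Multiset.map_map, Function.comp_def, normHom_apply] using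
    map_multiset_prod (normHom : K →*₀ ℝ) (f.roots.map (z - ·))

lemma norm_le_cauchyBound_of_mem_roots {r : K} (hr : r ∈ f.roots) : ‖r‖ ≤ f.cauchyBound := by
  exact_mod_cast ((isRoot_of_mem_roots hr).norm_lt_cauchyBound (ne_zero_of_mem_roots hr)).le

lemma norm_eval_le_of_splits (hf : f.Splits) (z : K) :
    ‖f.eval z‖ ≤ ‖f.leadingCoeff‖ * (‖z‖ + f.cauchyBound) ^ f.natDegree := by
  have hfactor : ∀ r ∈ f.roots, ‖z - r‖ ≤ ‖z‖ + f.cauchyBound := fun r hr =>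
    (norm_sub_le z r).trans (by gcongr; exact norm_le_cauchyBound_of_mem_roots hr)
  calc ‖f.eval z‖ = ‖f.leadingCoeff‖ * (f.roots.map fun r => ‖z - r‖).prod :=
        norm_eval_eq_prod_norm_sub_roots hf z
    _ ≤ ‖f.leadingCoeff‖ * (f.roots.map fun _ => ‖z‖ + (f.cauchyBound : ℝ)).prod := by
        gcongr
        exact Multiset.prod_map_le_prod_map₀ _ _ (fun _ _ => norm_nonneg _) hfactor
    _ = ‖f.leadingCoeff‖ * (‖z‖ + f.cauchyBound) ^ f.natDegree := by
        simp [hf.natDegree_eq_card_roots]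

lemma le_norm_eval_of_splits (hf : f.Splits) {z : K} (hz : f.cauchyBound ≤ ‖z‖) :
    ‖f.leadingCoeff‖ * (‖z‖ - f.cauchyBound) ^ f.natDegree ≤ ‖f.eval z‖ := by
  have hfactor : ∀ r ∈ f.roots, ‖z‖ - f.cauchyBound ≤ ‖z - r‖ := fun r hr =>
    (sub_le_sub_left (norm_le_cauchyBound_of_mem_roots hr) ‖z‖).trans (norm_sub_norm_le z r)
  calc ‖f.leadingCoeff‖ * (‖z‖ - f.cauchyBound) ^ f.natDegree
      = ‖f.leadingCoeff‖ * (f.roots.map fun _ => ‖z‖ - (f.cauchyBound : ℝ)).prod := by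
        simp [hf.natDegree_eq_card_roots]
    _ ≤ ‖f.leadingCoeff‖ * (f.roots.map fun r => ‖z - r‖).prod := by
        gcongr
        exact Multiset.prod_map_le_prod_map₀ _ _ (fun _ _ => sub_nonneg.2 hz) hfactor
    _ = ‖f.eval z‖ := (norm_eval_eq_prod_norm_sub_roots hf z).symm

lemma norm_le_norm_add_cauchyBound_of_eval_eq (hf : f.Splits) (hg : g.Splits)
    (hdeg : f.natDegree = g.natDegree) (hlc : ‖f.leadingCoeff‖ = ‖g.leadingCoeff‖)
    (hpos : f.natDegree ≠ 0) {z w : K} (h : f.eval z = g.eval w) :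
    ‖z‖ ≤ ‖w‖ + (f.cauchyBound + g.cauchyBound) := by
  rcases le_total ‖z‖ f.cauchyBound with hz | hz
  · linarith [norm_nonneg w, g.cauchyBound.coe_nonneg]
  have hlc_pos : 0 < ‖f.leadingCoeff‖ := by
    rw [norm_pos_iff, leadingCoeff_ne_zero]
    exact ne_zero_of_natDegree_gt (Nat.pos_of_ne_zero hpos)
  have hpow : (‖z‖ - f.cauchyBound) ^ f.natDegree ≤ (‖w‖ + g.cauchyBound) ^ f.natDegree := by
    refine le_of_mul_le_mul_left ?_ hlc_pos
    calc ‖f.leadingCoeff‖ * (‖z‖ - f.cauchyBound) ^ f.natDegree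
        ≤ ‖f.eval z‖ := le_norm_eval_of_splits hf hz
      _ = ‖g.eval w‖ := by rw [h]
      _ ≤ ‖g.leadingCoeff‖ * (‖w‖ + g.cauchyBound) ^ g.natDegree := norm_eval_le_of_splits hg w
      _ = ‖f.leadingCoeff‖ * (‖w‖ + g.cauchyBound) ^ f.natDegree := by rw [hlc, hdeg]
  linarith [le_of_pow_le_pow_left₀ hpos (by positivity) hpow]

lemma abs_norm_sub_norm_le_of_eval_eq (hf : f.Splits) (hg : g.Splits)
    (hdeg : f.natDegree = g.natDegree) (hlc : ‖f.leadingCoeff‖ = ‖g.leadingCoeff‖)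
    (hpos : f.natDegree ≠ 0) {z w : K} (h : f.eval z = g.eval w) :
    |‖z‖ - ‖w‖| ≤ f.cauchyBound + g.cauchyBound :=
  abs_sub_le_iff.2
    ⟨sub_le_iff_le_add'.2 <| norm_le_norm_add_cauchyBound_of_eval_eq hf hg hdeg hlc hpos h,
      sub_le_iff_le_add'.2 <| add_comm (f.cauchyBound : ℝ) g.cauchyBound ▸
        norm_le_norm_add_cauchyBound_of_eval_eq hg hf hdeg.symm hlc.symm (hdeg ▸ hpos) h.symm⟩

end Growth

lemma finite_setOf_eval_eq_eval_on_graph {R : Type*} [CommRing R] [IsDomain R] {f g p : R[X]}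
    (hne : f ≠ g.comp p) :
    {z : R × R | z.2 = p.eval z.1 ∧ f.eval z.1 = g.eval z.2}.Finite := by
  have hfinite : {x | f.eval x = (g.comp p).eval x}.Finite :=
    Set.not_infinite.1 (mt (eq_of_infinite_eval_eq f (g.comp p)) hne)
  refine (hfinite.image fun x => (x, p.eval x)).subset ?_
  rintro ⟨x, y⟩ ⟨hy, hxy⟩
  exact ⟨x, by simpa [← hy] using hxy, Prod.ext rfl hy.symm⟩

section Integers

variable {f g : ℤ[X]}

lemma exists_abs_abs_sub_abs_le_of_eval_eq (hdeg : f.natDegree = g.natDegree)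
    (hlc : |f.leadingCoeff| = |g.leadingCoeff|) (hpos : f.natDegree ≠ 0) :
    ∃ N : ℤ, ∀ x y : ℤ, f.eval x = g.eval y → |(|x| - |y|)| ≤ N := by
  let φ : ℤ →+* ℂ := Int.castRingHom ℂ
  have hφ : Function.Injective φ := Int.cast_injective
  refine ⟨⌊((f.map φ).cauchyBound + (g.map φ).cauchyBound : ℝ)⌋, fun x y hxy => ?_⟩
  have hbound : |‖φ x‖ - ‖φ y‖| ≤ (f.map φ).cauchyBound + (g.map φ).cauchyBound := by
    apply abs_norm_sub_norm_le_of_eval_eq (IsAlgClosed.splits _) (IsAlgClosed.splits _)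
    · simpa only [natDegree_map_eq_of_injective hφ] using hdeg
    · simpa [leadingCoeff_map_of_injective hφ, φ] using congrArg (Int.cast : ℤ → ℝ) hlc
    · simpa only [natDegree_map_eq_of_injective hφ] using hpos
    · rw [eval_map_apply, eval_map_apply, hxy]
  rw [Int.le_floor]
  simpa [φ] using hbound

lemma exists_units_abs_sub_mul_eq (x y : ℤ) : ∃ u : ℤˣ, |y - u * x| = |(|x| - |y|)| := by
  by_cases hsign : 0 ≤ x ↔ 0 ≤ y
  · refine ⟨1, ?_⟩
    rw [Units.val_one, one_mul]
    grind
  · refine ⟨-1, ?_⟩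
    rw [Units.val_neg, Units.val_one, neg_one_mul, sub_neg_eq_add]
    grind

theorem stmt17_general (hdeg : f.natDegree = g.natDegree)
    (hlc : |f.leadingCoeff| = |g.leadingCoeff|)
    (hne : ∀ (u : ℤˣ) (k : ℤ), f ≠ g.comp (C (u : ℤ) * X + C k)) :
    {p : ℤ × ℤ | f.eval p.1 = g.eval p.2}.Finite := by
  rcases eq_or_ne f.natDegree 0 with h0 | hpos
  · obtain ⟨a, rfl⟩ := natDegree_eq_zero.1 h0
    obtain ⟨b, rfl⟩ := natDegree_eq_zero.1 (hdeg ▸ h0)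
    have hab : a ≠ b := by simpa using hne 1 0
    simp [hab]
  obtain ⟨N, hN⟩ := exists_abs_abs_sub_abs_le_of_eval_eq hdeg hlc hpos
  have hlines : (⋃ u : ℤˣ, ⋃ k ∈ Set.Icc (-N) N,
      {p : ℤ × ℤ | p.2 = (C (u : ℤ) * X + C k).eval p.1 ∧ f.eval p.1 = g.eval p.2}).Finite :=
    Set.finite_iUnion fun u => (Set.finite_Icc (-N) N).biUnion fun k _ =>
      finite_setOf_eval_eq_eval_on_graph (hne u k)
  refine hlines.subset fun ⟨x, y⟩ hxy => ?_
  obtain ⟨u, hu⟩ := exists_units_abs_sub_mul_eq x y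
  have hk : y - u * x ∈ Set.Icc (-N) N := abs_le.1 (hu ▸ hN x y hxy)
  exact Set.mem_iUnion.2 ⟨u, Set.mem_biUnion hk ⟨by simp, hxy⟩⟩

end Integers

section LinearFactors

variable {ι R : Type*} [Fintype ι] [CommSemiring R] [Nontrivial R]

lemma natDegree_prod_X_add_C (c : ι → R) : (∏ i, (X + C (c i))).natDegree = Fintype.card ι := by
  rw [natDegree_prod_of_monic _ _ fun i _ => monic_X_add_C (c i)]
  simp only [natDegree_X_add_C, Finset.sum_const, Finset.card_univ, smul_eq_mul, mul_one]

lemma exists_eq_prod_X_add_C_of_splits {f : R[X]} {m : ℕ} (hf : f.Monic) (hdeg : f.natDegree = m)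
    (hsplits : f.Splits) : ∃ c : Fin m → R, f = ∏ i, (X + C (c i)) := by
  obtain ⟨s, hs⟩ := splits_iff_exists_multiset'.1 hsplits
  obtain ⟨l, rfl⟩ : ∃ l : List R, (l : Multiset R) = s := ⟨s.toList, s.coe_toList⟩
  have hprod : f = ∏ i : Fin l.length, (X + C l[i]) := by
    rw [hs, hf.leadingCoeff, C_1, one_mul, Multiset.map_coe, Multiset.prod_coe]
    exact (Fin.prod_univ_fun_getElem l (X + C ·)).symm
  obtain rfl : l.length = m := by
    rw [← hdeg, hprod, natDegree_prod_X_add_C, Fintype.card_fin]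
  exact ⟨fun i => l[i], hprod⟩

lemma finite_setOf_prod_add_eq_eval_of_not_splits {f : ℤ[X]} (hf : f.Monic)
    (hdeg : f.natDegree = Fintype.card ι) (hsplits : ¬ f.Splits) (q : ι → ℤ) :
    {p : ℤ × ℤ | ∏ i, (p.2 + q i) = f.eval p.1}.Finite := by
  let g : ℤ[X] := ∏ i, (X + C (q i))
  have hg : g.Monic := monic_prod_of_monic _ _ fun i _ => monic_X_add_C _
  have hgsplits : g.Splits := Splits.prod fun i _ => Splits.X_add_C (q i)
  have hne (u : ℤˣ) (k : ℤ) : f ≠ g.comp (C (u : ℤ) * X + C k) := by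
    rintro rfl
    have hlead : IsUnit (C (u : ℤ) * X + C k).leadingCoeff := by
      rw [leadingCoeff_linear u.ne_zero]
      exact u.isUnit
    exact hsplits <|
      hgsplits.comp_of_natDegree_le_one_of_invertible natDegree_linear_le hlead.invertible
  have hfinite : {p : ℤ × ℤ | f.eval p.1 = g.eval p.2}.Finite :=
    stmt17_general (hdeg.trans (natDegree_prod_X_add_C q).symm)
      (by rw [hf.leadingCoeff, hg.leadingCoeff]) hne
  simpa [g, eval_prod, eq_comm] using hfinite

end LinearFactors

theorem stmt17 (m : ℕ) (f : Polynomial ℤ) (hf : f.Monic) (hdeg : f.natDegree = m)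
    (hroots : ¬ ∃ c : Fin m → ℤ, f = ∏ i, (X + C (c i)))
    (q : Fin m → ℤ) :
    {p : ℤ × ℤ | p.1 < 0 ∧ p.2 < 0 ∧ (∏ i, (p.2 + q i)) = f.eval p.1}.Finite :=
  (finite_setOf_prod_add_eq_eval_of_not_splits hf (by simpa using hdeg)
    (mt (exists_eq_prod_X_add_C_of_splits hf hdeg) hroots) q).subset fun _ hp => hp.2.2
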